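/- Let d ≥ 3 and let Ψ be a random vector with the uniform distribution on the sphere of radius √d centered at the origin in ℝ^d. Then for all unit vectors u, v ∈ ℝ^d and every ℓ ∈ (0, 4): E[(v'Ψ)²·1(|u'Ψ| ≤ ℓ)] ≤ 4ℓ. -/

import Mathlib

open MeasureTheory Matrix

noncomputable section

/-- The Euclidean norm of a vector in `Fin d → ℝ`. -/
def eNorm {d : ℕ} (x : Fin d → ℝ) : ℝ := Real.sqrt (∑ i, x i ^ 2)

/-- `F` is the uniform (rotation-invariant) probability distribution on the sphere of radius
`√d` centered at the origin in `ℝ^d`. -/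
def IsUniformOnSphere (d : ℕ) (F : Measure (Fin d → ℝ)) : Prop :=
  IsProbabilityMeasure F ∧
    F {x | ∑ i, x i ^ 2 = (d : ℝ)} = 1 ∧
    ∀ O : Matrix (Fin d) (Fin d) ℝ, Oᵀ * O = 1 → F.map (fun x => O *ᵥ x) = F

/-- Orthonormal extension in matrix form. -/
lemma exists_orth (d : ℕ) (V : Fin d → Fin d → ℝ) (s : Set (Fin d))
    (hV : ∀ i ∈ s, ∀ j ∈ s, V i ⬝ᵥ V j = if i = j then 1 else 0) :
    ∃ O : Matrix (Fin d) (Fin d) ℝ, Oᵀ * O = 1 ∧ O * Oᵀ = 1 ∧ ∀ i ∈ s, O i = V i := by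
  have hon : Orthonormal ℝ (s.domRestrict (fun i => (WithLp.toLp 2 (V i) : EuclideanSpace ℝ (Fin d)))) := by
    classical
    rw [orthonormal_iff_ite]
    rintro ⟨i, hi⟩ ⟨j, hj⟩
    have := hV i hi j hj
    simp only [Set.domRestrict_apply, Subtype.mk.injEq]
    rw [← this]
    simp [PiLp.inner_apply, dotProduct, mul_comm]
  obtain ⟨b, hb⟩ := hon.exists_orthonormalBasis_extension_of_card_eq (by simp)
  have h1 : (Matrix.of (fun i j => b i j)) * (Matrix.of (fun i j => b i j))ᵀ = 1 := by
    ext i j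
    have := orthonormal_iff_ite.1 b.orthonormal i j
    rw [Matrix.one_apply, ← this]
    simp [Matrix.mul_apply, PiLp.inner_apply, mul_comm]
  refine ⟨_, mul_eq_one_comm.1 h1, h1, ?_⟩
  intro i hi
  ext j
  simp [hb i hi]

lemma law_pair {d : ℕ} {F : Measure (Fin d → ℝ)} (hF : IsUniformOnSphere d F)
    (p q : Fin d) (hpq : p ≠ q) (u w : Fin d → ℝ) (hu : u ⬝ᵥ u = 1) (hw : w ⬝ᵥ w = 1)
    (huw : u ⬝ᵥ w = 0) (f : ℝ → ℝ → ℝ) (hf : Continuous (fun z : ℝ × ℝ => f z.1 z.2)) :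
    ∫ x, f (u ⬝ᵥ x) (w ⬝ᵥ x) ∂F = ∫ x, f (x p) (x q) ∂F := by
  classical
  obtain ⟨O, hO, -, hO2⟩ := exists_orth d (fun i => if i = p then u else w) {p, q} (by
    have hwu : w ⬝ᵥ u = 0 := by rw [dotProduct_comm]; exact huw
    rintro i (rfl | rfl) j (rfl | rfl) <;> simp [*, hpq.symm])
  have hp : O p = u := by simpa using hO2 p (by simp)
  have hq : O q = w := by simpa [hpq.symm] using hO2 q (by simp)
  have hc : Continuous (fun x : Fin d → ℝ => O *ᵥ x) := by fun_prop
  have hc2 : Continuous (fun x : Fin d → ℝ => f (x p) (x q)) :=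
    hf.comp (by fun_prop : Continuous (fun x : Fin d → ℝ => (x p, x q)))
  conv_rhs => rw [← hF.2.2 O hO]
  rw [integral_map hc.measurable.aemeasurable hc2.aestronglyMeasurable]
  simp [Matrix.mulVec, hp, hq]

lemma integrable_cont {d : ℕ} {F : Measure (Fin d → ℝ)} (hF : IsUniformOnSphere d F)
    (f : (Fin d → ℝ) → ℝ) (hf : Continuous f) : Integrable f F := by
  have := hF.1
  have hcl : IsClosed {x : Fin d → ℝ | ∑ i, x i ^ 2 = (d : ℝ)} :=
    isClosed_eq (by fun_prop) (by fun_prop)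
  have hcp : IsCompact {x : Fin d → ℝ | ∑ i, x i ^ 2 = (d : ℝ)} := by
    refine (isCompact_univ_pi (fun _ : Fin d => isCompact_Icc (a := -(d + 1 : ℝ)) (b := d + 1))).of_isClosed_subset hcl ?_
    intro x hx i _
    have h1 : x i ^ 2 ≤ d := by
      rw [← (show ∑ i, x i ^ 2 = (d : ℝ) from hx)]
      exact Finset.single_le_sum (f := fun i => x i ^ 2) (fun i _ => sq_nonneg _) (Finset.mem_univ i)
    constructor <;> nlinarith [Nat.cast_nonneg (α := ℝ) d]
  have hae : ∀ᵐ x ∂F, x ∈ {x : Fin d → ℝ | ∑ i, x i ^ 2 = (d : ℝ)} := by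
    exact (mem_ae_iff_prob_eq_one hcl.measurableSet).2 hF.2.1
  have := hf.continuousOn.integrableOn_compact (μ := F) hcp
  rwa [IntegrableOn, Measure.restrict_eq_self_of_ae_mem hae] at this

lemma second_moment {d : ℕ} (hd : 3 ≤ d) {F : Measure (Fin d → ℝ)} (hF : IsUniformOnSphere d F)
    (u w : Fin d → ℝ) (hu : u ⬝ᵥ u = 1) (hw : w ⬝ᵥ w = 1)
    (huw : u ⬝ᵥ w = 0) : ∫ x, (u ⬝ᵥ x) ^ 2 ∂F = 1 := by
  have := hF.1
  have : Nontrivial (Fin d) := Fin.nontrivial_iff_two_le.2 (by omega)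
  have key : ∀ p : Fin d, ∫ x, x p ^ 2 ∂F = ∫ x, (u ⬝ᵥ x) ^ 2 ∂F := by
    intro p
    obtain ⟨q, hq⟩ := exists_ne p
    exact (law_pair hF p q hq.symm u w hu hw huw (fun a _ => a ^ 2) (by fun_prop)).symm
  have hcl : IsClosed {x : Fin d → ℝ | ∑ i, x i ^ 2 = (d : ℝ)} :=
    isClosed_eq (by fun_prop) (by fun_prop)
  have hae : ∀ᵐ x ∂F, x ∈ {x : Fin d → ℝ | ∑ i, x i ^ 2 = (d : ℝ)} := by
    exact (mem_ae_iff_prob_eq_one hcl.measurableSet).2 hF.2.1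
  have h1 : ∫ x, ∑ i, x i ^ 2 ∂F = d := by
    rw [integral_congr_ae (g := fun _ => (d : ℝ)) hae]; simp
  rw [integral_finsetSum _ (fun i _ => integrable_cont hF _ (by fun_prop))] at h1
  simp only [key] at h1
  simp only [Finset.sum_const, Finset.card_univ, Fintype.card_fin, nsmul_eq_mul] at h1
  have hd0 : (d : ℝ) ≠ 0 := by
    have : d ≠ 0 := by omega
    exact_mod_cast this
  exact mul_left_cancel₀ hd0 (by rw [h1, mul_one])

lemma stein {d : ℕ} (hd : 3 ≤ d) {F : Measure (Fin d → ℝ)} (hF : IsUniformOnSphere d F)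
    (u w : Fin d → ℝ) (hu : u ⬝ᵥ u = 1) (hw : w ⬝ᵥ w = 1)
    (huw : u ⬝ᵥ w = 0) (l : ℝ) (hl : 0 < l) :
    ∫ x, ((u ⬝ᵥ x) * (2 * l * Real.arctan ((u ⬝ᵥ x) / l))
      - (w ⬝ᵥ x) ^ 2 * (2 / (1 + ((u ⬝ᵥ x) / l) ^ 2))) ∂F = 0 := by
  have := hF.1
  set p : Fin d := ⟨0, by omega⟩
  set q : Fin d := ⟨1, by omega⟩
  have hpq : p ≠ q := by simp [p, q]
  let f : ℝ → ℝ → ℝ := fun a b => b * (2 * l * Real.arctan (a / l))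
  let f' : ℝ → ℝ → ℝ := fun a b =>
    a * (2 * l * Real.arctan (a / l)) - b ^ 2 * (2 / (1 + (a / l) ^ 2))
  have hpos : ∀ a : ℝ, (1 + (a / l) ^ 2) ≠ 0 := fun a => by positivity
  have hfc : Continuous (fun z : ℝ × ℝ => f z.1 z.2) := by
    have := Real.continuous_arctan
    simp only [f]; fun_prop
  have hfc' : Continuous (fun z : ℝ × ℝ => f' z.1 z.2) := by
    have := Real.continuous_arctan
    simp only [f']
    refine Continuous.sub (by fun_prop) (Continuous.mul (by fun_prop) (Continuous.div (by fun_prop) (by fun_prop) ?_))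
    intro z; exact hpos _
  let A : ℝ → (Fin d → ℝ) → ℝ := fun t x => Real.cos t * (u ⬝ᵥ x) - Real.sin t * (w ⬝ᵥ x)
  let B : ℝ → (Fin d → ℝ) → ℝ := fun t x => Real.sin t * (u ⬝ᵥ x) + Real.cos t * (w ⬝ᵥ x)
  have hdu : Continuous (fun x : Fin d → ℝ => u ⬝ᵥ x) := by unfold dotProduct; fun_prop
  have hdw : Continuous (fun x : Fin d → ℝ => w ⬝ᵥ x) := by unfold dotProduct; fun_prop
  have hAB : ∀ t, Continuous (fun x => (A t x, B t x)) := fun t => by simp only [A, B]; fun_prop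
  have hconst : ∀ t, ∫ x, f (A t x) (B t x) ∂F = ∫ x, f (x p) (x q) ∂F := by
    intro t
    have hwu : w ⬝ᵥ u = 0 := by rw [dotProduct_comm]; exact huw
    have h := law_pair hF p q hpq (Real.cos t • u - Real.sin t • w) (Real.sin t • u + Real.cos t • w)
      (by simp [sub_dotProduct, dotProduct_sub, hu, hw, huw, hwu]; nlinarith [Real.sin_sq_add_cos_sq t])
      (by simp [add_dotProduct, dotProduct_add, hu, hw, huw, hwu]; nlinarith [Real.sin_sq_add_cos_sq t])
      (by simp [sub_dotProduct, dotProduct_add, hu, hw, huw, hwu]; ring) f hfc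
    rw [← h]
    simp [A, B, sub_dotProduct, add_dotProduct]
  have hder := (hasDerivAt_integral_of_dominated_loc_of_deriv_le (μ := F) (s := Set.univ)
    (F := fun t x => f (A t x) (B t x)) (F' := fun t x => f' (A t x) (B t x)) (x₀ := 0)
    (bound := fun x => (1 + (u ⬝ᵥ x) ^ 2 + (w ⬝ᵥ x) ^ 2) * (4 * l + 2)) Filter.univ_mem
    (Filter.Eventually.of_forall fun t => (hfc.comp (hAB t)).aestronglyMeasurable)
    (integrable_cont hF _ (hfc.comp (hAB 0)))
    (hfc'.comp (hAB 0)).aestronglyMeasurable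
    (Filter.Eventually.of_forall fun x t _ => by
      have hr : A t x ^ 2 + B t x ^ 2 = (u ⬝ᵥ x) ^ 2 + (w ⬝ᵥ x) ^ 2 := by
        simp only [A, B]
        linear_combination ((u ⬝ᵥ x) ^ 2 + (w ⬝ᵥ x) ^ 2) * Real.sin_sq_add_cos_sq t
      rw [add_assoc, ← hr]
      generalize A t x = a
      generalize B t x = b
      simp only [f', Real.norm_eq_abs]
      have h1 : |Real.arctan (a / l)| ≤ 2 := by
        rw [abs_le]
        constructor <;> linarith [Real.arctan_lt_pi_div_two (a / l), Real.neg_pi_div_two_lt_arctan (a / l), Real.pi_lt_four]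
      have h2 : 2 / (1 + (a / l) ^ 2) ≤ 2 := by
        rw [div_le_iff₀ (by positivity)]; nlinarith [sq_nonneg (a / l)]
      have h2' : 0 ≤ 2 / (1 + (a / l) ^ 2) := by positivity
      have h3 : |a| ≤ 1 + a ^ 2 := by nlinarith [sq_abs a, sq_nonneg (|a| - 1), abs_nonneg a]
      have h4 : |a * (2 * l * Real.arctan (a / l))| ≤ (1 + a ^ 2) * (4 * l) := by
        rw [abs_mul, abs_mul, abs_of_pos (by positivity : 0 < 2 * l)]
        exact mul_le_mul h3 (by nlinarith) (by positivity) (by positivity)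
      have h5 : |b ^ 2 * (2 / (1 + (a / l) ^ 2))| ≤ b ^ 2 * 2 := by
        rw [abs_of_nonneg (by positivity)]
        exact mul_le_mul_of_nonneg_left h2 (by positivity)
      refine (abs_sub _ _).trans ?_
      nlinarith [mul_nonneg (sq_nonneg b) hl.le, sq_nonneg a])
    (integrable_cont hF _ (by fun_prop))
    (Filter.Eventually.of_forall fun x t _ => by
      have hA : HasDerivAt (fun t => A t x) (-B t x) t := by
        have := ((Real.hasDerivAt_cos t).mul_const (u ⬝ᵥ x)).sub ((Real.hasDerivAt_sin t).mul_const (w ⬝ᵥ x))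
        refine this.congr_deriv ?_
        simp only [B]; ring
      have hB : HasDerivAt (fun t => B t x) (A t x) t := by
        have := ((Real.hasDerivAt_sin t).mul_const (u ⬝ᵥ x)).add ((Real.hasDerivAt_cos t).mul_const (w ⬝ᵥ x))
        refine this.congr_deriv ?_
        simp only [A]; ring
      have h := hB.mul (((hA.div_const l).arctan).const_mul (2 * l))
      refine h.congr_deriv ?_
      have := hpos (A t x)
      simp only [f']
      field_simp
      ring)).2
  simp only [hconst] at hder
  have h0 := hder.unique (hasDerivAt_const _ _)
  simpa [A, B, f'] using h0

lemma exists_decomp {d : ℕ} (hd : 3 ≤ d) (u v : Fin d → ℝ) (hu : u ⬝ᵥ u = 1) (hv : v ⬝ᵥ v = 1) :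
    ∃ (w : Fin d → ℝ) (a b : ℝ), w ⬝ᵥ w = 1 ∧ u ⬝ᵥ w = 0 ∧ a ^ 2 + b ^ 2 = 1 ∧
      v = a • u + b • w := by
  set a := u ⬝ᵥ v with ha
  have hvu : v ⬝ᵥ u = a := by rw [dotProduct_comm]
  have hz : (v - a • u) ⬝ᵥ (v - a • u) = 1 - a ^ 2 := by
    simp [sub_dotProduct, dotProduct_sub, hu, hv, hvu, ← ha]; ring
  have huz : u ⬝ᵥ (v - a • u) = 0 := by
    simp [dotProduct_sub, hu, ← ha]
  by_cases h : v - a • u = 0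
  · set p : Fin d := ⟨0, by omega⟩
    set q : Fin d := ⟨1, by omega⟩
    have hpq : p ≠ q := by simp [p, q]
    obtain ⟨O, -, hO, hO2⟩ := exists_orth d (fun _ => u) {p} (by
      rintro i rfl j rfl; simp [hu])
    have hOp : O p = u := hO2 p rfl
    have hm : ∀ i j, O i ⬝ᵥ O j = (1 : Matrix (Fin d) (Fin d) ℝ) i j := by
      intro i j; rw [← hO]; rfl
    refine ⟨O q, a, 0, ?_, ?_, ?_, ?_⟩
    · simp [hm]
    · rw [← hOp, hm]; simp [hpq]
    · rw [h] at hz; simp at hz; linarith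
    · simpa using sub_eq_zero.1 h
  · have hpos : 0 < 1 - a ^ 2 := by
      rw [← hz]
      refine lt_of_le_of_ne ?_ (fun h' => h (dotProduct_self_eq_zero.1 h'.symm))
      exact Finset.sum_nonneg (fun i _ => mul_self_nonneg _)
    have hs := Real.sq_sqrt hpos.le
    have hs0 := Real.sqrt_pos.2 hpos
    refine ⟨(Real.sqrt (1 - a ^ 2))⁻¹ • (v - a • u), a, Real.sqrt (1 - a ^ 2), ?_, ?_, ?_, ?_⟩
    · rw [smul_dotProduct, dotProduct_smul, hz]
      simp only [smul_eq_mul]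
      field_simp
      exact hs.symm
    · rw [dotProduct_smul, huz, smul_zero]
    · linarith
    · rw [smul_smul, mul_inv_cancel₀ hs0.ne', one_smul]; abel

lemma pointwise (l : ℝ) (hl : 0 < l) (X Y a b : ℝ) (hab : a ^ 2 + b ^ 2 = 1) :
    (a * X + b * Y) ^ 2 * (if |X| ≤ l then 1 else 0) ≤
      2 * l * (1 + X ^ 2) - (X * (2 * l * Real.arctan (X / l))
      - Y ^ 2 * (2 / (1 + (X / l) ^ 2))) := by
  have h3 : 2 * |X| ≤ 1 + X ^ 2 := by nlinarith [sq_abs X, sq_nonneg (|X| - 1)]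
  have hY : 0 ≤ Y ^ 2 * (2 / (1 + (X / l) ^ 2)) := by positivity
  split_ifs with h
  · have hXl : |X / l| ≤ 1 := by
      rw [abs_div, abs_of_pos hl, div_le_one hl]; exact h
    have harc : |Real.arctan (X / l)| ≤ 1 := by
      have h1 : Real.arctan 1 ≤ 1 := by
        rw [Real.arctan_one]; linarith [Real.pi_lt_four]
      rw [abs_le] at hXl ⊢
      constructor
      · have := Real.arctan_strictMono.monotone hXl.1
        rw [Real.arctan_neg] at this; linarith
      · have := Real.arctan_strictMono.monotone hXl.2
        linarith
    have h4 : X * (2 * l * Real.arctan (X / l)) ≤ |X| * (2 * l) := by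
      refine (le_abs_self _).trans ?_
      rw [abs_mul, abs_mul, abs_of_pos (by positivity : 0 < 2 * l)]
      exact mul_le_mul_of_nonneg_left (by nlinarith) (abs_nonneg _)
    have h5 : X ^ 2 ≤ |X| * l := by
      rw [← sq_abs]; nlinarith [abs_nonneg X]
    have h6 : Y ^ 2 ≤ Y ^ 2 * (2 / (1 + (X / l) ^ 2)) := by
      refine le_mul_of_one_le_right (sq_nonneg _) ?_
      rw [le_div_iff₀ (by positivity)]
      have := (sq_le_one_iff_abs_le_one _).2 hXl
      linarith
    have h7 : (a * X + b * Y) ^ 2 ≤ X ^ 2 + Y ^ 2 := by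
      have : (a * X + b * Y) ^ 2 = (a ^ 2 + b ^ 2) * (X ^ 2 + Y ^ 2) - (a * Y - b * X) ^ 2 := by ring
      rw [this, hab]; nlinarith [sq_nonneg (a * Y - b * X)]
    have h8 := mul_le_mul_of_nonneg_left h3 hl.le
    have h9 := mul_nonneg hl.le (abs_nonneg X)
    nlinarith
  · have h1 : |Real.arctan (X / l)| ≤ 2 := by
      rw [abs_le]
      constructor <;> linarith [Real.arctan_lt_pi_div_two (X / l), Real.neg_pi_div_two_lt_arctan (X / l), Real.pi_lt_four]
    have h4 : X * (2 * l * Real.arctan (X / l)) ≤ |X| * (4 * l) := by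
      refine (le_abs_self _).trans ?_
      rw [abs_mul, abs_mul, abs_of_pos (by positivity : 0 < 2 * l)]
      exact mul_le_mul_of_nonneg_left (by nlinarith) (abs_nonneg _)
    have h8 := mul_le_mul_of_nonneg_left h3 hl.le
    nlinarith

/-- If `Ψ` is uniform on the sphere of radius `√d` in `ℝ^d`, `d ≥ 3`, then for
all unit vectors `u, v` and `ℓ ∈ (0,4)`, `E[(v'Ψ)² 1(|u'Ψ| ≤ ℓ)] ≤ 4ℓ`. -/
theorem stmt_16 (d : ℕ) (hd : 3 ≤ d)
    (Ω : Type) [MeasurableSpace Ω] (μ : Measure Ω) [IsProbabilityMeasure μ]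
    (Ψ : Ω → Fin d → ℝ) (hΨ : Measurable Ψ)
    (hunif : IsUniformOnSphere d (μ.map Ψ))
    (u v : Fin d → ℝ) (hu : eNorm u = 1) (hv : eNorm v = 1)
    (ℓ : ℝ) (hℓ0 : 0 < ℓ) (hℓ4 : ℓ < 4) :
    ∫ ω, (v ⬝ᵥ Ψ ω) ^ 2 * (if |u ⬝ᵥ Ψ ω| ≤ ℓ then 1 else 0) ∂μ ≤ 4 * ℓ := by
  have hF := hunif
  have sq1 : ∀ z : Fin d → ℝ, eNorm z = 1 → z ⬝ᵥ z = 1 := by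
    intro z hz
    rw [eNorm, Real.sqrt_eq_one] at hz
    simpa [dotProduct, sq] using hz
  have hu1 := sq1 u hu
  have hv1 := sq1 v hv
  obtain ⟨w, a, b, hw, huw, hab, rfl⟩ := exists_decomp hd u v hu1 hv1
  have hdu : Continuous (fun x : Fin d → ℝ => u ⬝ᵥ x) := by unfold dotProduct; fun_prop
  have hdw : Continuous (fun x : Fin d → ℝ => w ⬝ᵥ x) := by unfold dotProduct; fun_prop
  have := hF.1
  have hc1 : Continuous (fun x : Fin d → ℝ => 2 * ℓ * (1 + (u ⬝ᵥ x) ^ 2)) := by fun_prop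
  have hc2 : Continuous (fun x : Fin d → ℝ => (u ⬝ᵥ x) * (2 * ℓ * Real.arctan ((u ⬝ᵥ x) / ℓ))
      - (w ⬝ᵥ x) ^ 2 * (2 / (1 + ((u ⬝ᵥ x) / ℓ) ^ 2))) := by
    have := Real.continuous_arctan
    refine Continuous.sub (by fun_prop) (Continuous.mul (by fun_prop)
      (Continuous.div (by fun_prop) (by fun_prop) ?_))
    intro z
    positivity
  have hi1 := integrable_cont hF _ hc1
  have hi2 := integrable_cont hF _ hc2
  have hI : ∫ x, (2 * ℓ * (1 + (u ⬝ᵥ x) ^ 2) - ((u ⬝ᵥ x) * (2 * ℓ * Real.arctan ((u ⬝ᵥ x) / ℓ))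
      - (w ⬝ᵥ x) ^ 2 * (2 / (1 + ((u ⬝ᵥ x) / ℓ) ^ 2)))) ∂(μ.map Ψ) = 4 * ℓ := by
    rw [integral_sub hi1 hi2, stein hd hF u w hu1 hw huw ℓ hℓ0, integral_const_mul,
      integral_add (integrable_const _) (integrable_cont hF _ (by fun_prop)),
      second_moment hd hF u w hu1 hw huw]
    simp
    ring
  have hmap := integral_map (μ := μ) hΨ.aemeasurable (hc1.sub hc2).aestronglyMeasurable
  simp only [Pi.sub_apply] at hmap
  rw [← hI, hmap]
  refine integral_mono_of_nonneg (Filter.Eventually.of_forall fun ω => ?_)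
    ((hi1.sub hi2).comp_measurable hΨ) (Filter.Eventually.of_forall fun ω => ?_)
  · simp only [Pi.zero_apply]
    split_ifs <;> positivity
  · have h := pointwise ℓ hℓ0 (u ⬝ᵥ Ψ ω) (w ⬝ᵥ Ψ ω) a b hab
    simpa only [add_dotProduct, smul_dotProduct, smul_eq_mul] using h
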